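/- Let k ≥ 2 and 2 ≤ ℓ ≤ k be integers, let u be a real number and L ≥ 0. Then I_{k,ℓ}(u,L) = ∑_{m=0}^∞ u^m · L^{k+m−1} · 2^{1−k} / (k+m−1)! · C(ℓ+m−2, m), where the series on the right converges absolutely. -/

import Mathlib

open Real MeasureTheory

/-- `I_{k,ℓ}(u,L)`: the integral of `exp(2u(v₁+⋯+v_{ℓ−1}))` over the open simplex
`{v ∈ ℝ^{k−1} : vᵢ > 0, v₁+⋯+v_{k−1} < L/2}` (coordinates are 0-indexed:
`v i` is `v_{i+1}`). -/
noncomputable def Ikl (k l : ℕ) (u L : ℝ) : ℝ :=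
  ∫ v in {v : Fin (k-1) → ℝ | (∀ i, 0 < v i) ∧ ∑ i, v i < L/2},
    Real.exp (2 * u * ∑ i ∈ Finset.univ.filter (fun i : Fin (k-1) => i.val < l - 1), v i)

/-- The `j`-th (1-indexed) coordinate `w_j` for `1 ≤ j ≤ k−1`, with the convention
`w_k = L/2 − (w₁+⋯+w_{k−1})`. -/
noncomputable def wcoord (k : ℕ) (L : ℝ) (w : Fin (k-1) → ℝ) (j : ℕ) : ℝ :=
  if h : j - 1 < k - 1 then w ⟨j - 1, h⟩ else L/2 - ∑ i, w i

/-- `Ĩ_{k,ℓ}(u,L)`: the integral of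
`exp(−2u(w₂+⋯+w_ℓ))·(1−e^{−w_ℓ})^{−2u}·(1−e^{−w₁})^{2u}` over the open simplex
`{w ∈ ℝ^{k−1} : wᵢ > 0, w₁+⋯+w_{k−1} < L/2}`, where `w_k = L/2 − (w₁+⋯+w_{k−1})`. -/
noncomputable def Itkl (k l : ℕ) (u L : ℝ) : ℝ :=
  ∫ w in {w : Fin (k-1) → ℝ | (∀ i, 0 < w i) ∧ ∑ i, w i < L/2},
    Real.exp (-(2*u) * ∑ j ∈ Finset.Icc 2 l, wcoord k L w j)
      * (1 - Real.exp (-(wcoord k L w l))) ^ (-(2*u))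
      * (1 - Real.exp (-(wcoord k L w 1))) ^ (2*u)

/-- coefficient term -/
noncomputable def tt (c : ℝ) (n p m : ℕ) (T : ℝ) : ℝ :=
  c^m * ((p+m-1).choose m : ℝ) * (T^(n+m) / ((n+m).factorial : ℝ))

noncomputable def SS (c : ℝ) (n p : ℕ) (T : ℝ) : ℝ := ∑' m, tt c n p m T

lemma tt_bound (c : ℝ) (n p m : ℕ) (T R : ℝ) (hR : |T| ≤ R) :
    ‖tt c n p m T‖ ≤ 2^p * R^n * ((2 * |c| * R)^m / (m.factorial : ℝ)) := by
  have hR0 : 0 ≤ R := (abs_nonneg _).trans hR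
  unfold tt
  rw [norm_mul, norm_mul, norm_div, norm_pow, norm_pow, Real.norm_natCast, Real.norm_natCast,
    Real.norm_eq_abs, Real.norm_eq_abs]
  have h1 : (((p+m-1).choose m : ℕ) : ℝ) ≤ 2^p * 2^m := by
    rw [← pow_add]
    have h := (Nat.choose_le_two_pow (p+m-1) m).trans
      (Nat.pow_le_pow_right (n := 2) (by norm_num) (Nat.sub_le (p+m) 1))
    exact_mod_cast h
  have h2 : (m.factorial : ℝ) ≤ ((n+m).factorial : ℝ) := by
    exact_mod_cast Nat.factorial_le (Nat.le_add_left m n)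
  have h3 : (0:ℝ) < m.factorial := by exact_mod_cast Nat.factorial_pos m
  calc |c|^m * ((p+m-1).choose m : ℝ) * (|T|^(n+m) / ((n+m).factorial : ℝ))
      ≤ |c|^m * (2^p * 2^m) * (R^(n+m) / (m.factorial : ℝ)) := by
        gcongr
    _ = _ := by rw [pow_add, mul_pow, mul_pow]; ring

lemma bound_summable (c : ℝ) (n p : ℕ) (R : ℝ) :
    Summable (fun m : ℕ => 2^p * R^n * ((2 * |c| * R)^m / (m.factorial : ℝ))) :=
  (Real.summable_pow_div_factorial _).mul_left _

lemma tt_summable (c : ℝ) (n p : ℕ) (T : ℝ) : Summable (fun m => tt c n p m T) :=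
  Summable.of_norm_bounded (bound_summable c n p |T|) (fun m => tt_bound c n p m T _ le_rfl)

lemma SS_cont (c : ℝ) (n p : ℕ) : Continuous (SS c n p) := by
  rw [continuous_iff_continuousAt]
  intro x
  have : ContinuousOn (SS c n p) (Metric.ball 0 (|x|+1)) := by
    refine continuousOn_tsum (fun m => ?_) (bound_summable c n p (|x|+1)) (fun m y hy => ?_)
    · unfold tt; fun_prop
    · refine tt_bound _ _ _ _ _ _ ?_
      simpa using (mem_ball_zero_iff.1 hy).le
  refine this.continuousAt (Metric.isOpen_ball.mem_nhds ?_)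
  simp

lemma tt_deriv (c : ℝ) (n p m : ℕ) (T : ℝ) :
    HasDerivAt (tt c (n+1) p m) (tt c n p m T) T := by
  unfold tt
  have h := ((hasDerivAt_pow (n+1+m) T).div_const ((n+1+m).factorial : ℝ)).const_mul
    (c^m * ((p+m-1).choose m : ℝ))
  refine h.congr_deriv ?_
  congr 1
  have e : n + 1 + m = (n+m)+1 := by ring
  rw [e, Nat.factorial_succ]
  have : ((n+m).factorial : ℝ) ≠ 0 := by positivity
  have : ((n:ℝ)+m+1) ≠ 0 := by positivity
  push_cast
  field_simp

lemma SS_deriv (c : ℝ) (n p : ℕ) (T : ℝ) :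
    HasDerivAt (SS c (n+1) p) (SS c n p T) T := by
  refine hasDerivAt_tsum_of_isPreconnected (t := Metric.ball 0 (|T|+1)) (y₀ := T)
    (bound_summable c n p (|T|+1)) Metric.isOpen_ball
    (convex_ball _ _).isPreconnected (fun m y _ => tt_deriv c n p m y) (fun m y hy => ?_)
    (by simp) (tt_summable c (n+1) p T) (by simp)
  refine tt_bound _ _ _ _ _ _ ?_
  simpa using (mem_ball_zero_iff.1 hy).le

lemma SS_pascal (c : ℝ) (n p : ℕ) (T : ℝ) :
    SS c n (p+1) T = c * SS c (n+1) (p+1) T + SS c n p T := by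
  unfold SS
  rw [(tt_summable c n (p+1) T).tsum_eq_zero_add, (tt_summable c n p T).tsum_eq_zero_add,
    ← tsum_mul_left]
  have h0 : tt c n (p+1) 0 T = tt c n p 0 T := by simp [tt]
  rw [h0, add_left_comm, ← ((tt_summable c (n+1) (p+1) T).mul_left c).tsum_add
    ((summable_nat_add_iff 1).2 (tt_summable c n p T))]
  congr 2
  ext m
  unfold tt
  have e1 : p + 1 + (m+1) - 1 = (p+m)+1 := by omega
  have e2 : p + 1 + m - 1 = p+m := by omega
  have e3 : p + (m+1) - 1 = p+m := by omega
  have e4 : n + 1 + m = n + (m+1) := by omega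
  rw [e1, e2, e3, e4, Nat.choose_succ_succ, pow_succ]
  push_cast
  ring

lemma SS_zero (c : ℝ) (n p : ℕ) : SS c (n+1) p 0 = 0 := by
  unfold SS tt
  have : ∀ m, (0:ℝ)^(n+1+m) = 0 := fun m => zero_pow (by omega)
  simp [this]

lemma SS_int0 (c : ℝ) (n p : ℕ) (T : ℝ) :
    ∫ x in (0:ℝ)..T, SS c n p (T - x) = SS c (n+1) p T := by
  rw [intervalIntegral.integral_comp_sub_left (fun y => SS c n p y)]
  rw [intervalIntegral.integral_eq_sub_of_hasDerivAt (fun x _ => SS_deriv c n p x)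
    ((SS_cont c n p).intervalIntegrable _ _)]
  simp [SS_zero]

lemma SS_int1 (c : ℝ) (n p : ℕ) (T : ℝ) :
    ∫ x in (0:ℝ)..T, Real.exp (c * x) * SS c n p (T - x) = SS c (n+1) (p+1) T := by
  have hd : ∀ x, HasDerivAt (fun x => - (Real.exp (c * x) * SS c (n+1) (p+1) (T - x)))
      (Real.exp (c * x) * SS c n p (T - x)) x := by
    intro x
    have h1 : HasDerivAt (fun x => Real.exp (c * x)) (Real.exp (c*x) * (c * 1)) x :=
      ((hasDerivAt_id x).const_mul c).exp
    have h2 : HasDerivAt (fun x => SS c (n+1) (p+1) (T - x)) (-(SS c n (p+1) (T - x))) x :=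
      HasDerivAt.comp_const_sub T x (SS_deriv c n (p+1) (T-x))
    refine (h1.mul h2).neg.congr_deriv ?_
    rw [SS_pascal c n p]
    ring
  rw [intervalIntegral.integral_eq_sub_of_hasDerivAt (fun x _ => hd x)]
  · simp [SS_zero]
  · apply Continuous.intervalIntegrable
    have := SS_cont c n p
    fun_prop

def simp' (n : ℕ) (T : ℝ) : Set (Fin n → ℝ) := {v | (∀ i, 0 < v i) ∧ ∑ i, v i < T}

noncomputable def ff (c : ℝ) (n p : ℕ) (v : Fin n → ℝ) : ℝ :=
  Real.exp (c * ∑ i ∈ Finset.univ.filter (fun i : Fin n => i.val < p), v i)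

noncomputable def JJ (c : ℝ) (n p : ℕ) (T : ℝ) : ℝ := ∫ v in simp' n T, ff c n p v

lemma simp'_meas (n : ℕ) (T : ℝ) : MeasurableSet (simp' n T) := by
  apply IsOpen.measurableSet
  unfold simp'
  rw [Set.setOf_and]
  refine IsOpen.inter ?_ (isOpen_lt (by fun_prop) (by fun_prop))
  rw [Set.setOf_forall]
  exact isOpen_iInter_of_finite fun i => isOpen_lt (by fun_prop) (by fun_prop)

lemma simp'_empty (n : ℕ) (T : ℝ) (hT : T ≤ 0) : simp' n T = ∅ := by
  ext v
  simp only [simp', Set.mem_setOf_eq, Set.mem_empty_iff_false, iff_false]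
  rintro ⟨h1, h2⟩
  have : 0 ≤ ∑ i, v i := Finset.sum_nonneg fun i _ => (h1 i).le
  linarith

lemma JJ_nonpos (c : ℝ) (n p : ℕ) (T : ℝ) (hT : T ≤ 0) : JJ c n p T = 0 := by
  simp [JJ, simp'_empty n T hT]

lemma ff_int (c : ℝ) (n p : ℕ) (T : ℝ) : IntegrableOn (ff c n p) (simp' n T) := by
  have h : IntegrableOn (ff c n p) (Set.Icc 0 (fun _ => T)) := by
    apply ContinuousOn.integrableOn_compact isCompact_Icc
    apply Continuous.continuousOn
    unfold ff
    fun_prop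
  refine h.mono_set ?_
  rintro v ⟨h1, h2⟩
  refine ⟨fun i => (h1 i).le, fun i => ?_⟩
  exact (Finset.single_le_sum (f := v) (fun j _ => (h1 j).le) (Finset.mem_univ i)).trans h2.le

lemma JJ_fubini (c : ℝ) (n p : ℕ) (T : ℝ) :
    JJ c (n+1) p T = ∫ x, ∫ w, (simp' (n+1) T).indicator (ff c (n+1) p) (Fin.cons x w) := by
  have hmp := (volume_preserving_piFinSuccAbove (fun _ : Fin (n+1) => ℝ) 0).symm
  have hi : Integrable ((simp' (n+1) T).indicator (ff c (n+1) p)) :=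
    (integrable_indicator_iff (simp'_meas _ _)).2 (ff_int c (n+1) p T)
  unfold JJ
  rw [← integral_indicator (simp'_meas _ _),
    ← hmp.integral_comp (MeasurableEquiv.measurableEmbedding _)]
  have hi2 := (hmp.integrable_comp_emb (MeasurableEquiv.measurableEmbedding _)).2 hi
  refine (integral_prod _ hi2).trans ?_
  simp [MeasurableEquiv.piFinSuccAbove, Fin.insertNthEquiv, Fin.insertNth_zero']

lemma mem_cons (n : ℕ) (T x : ℝ) (w : Fin n → ℝ) :
    (Fin.cons x w : Fin (n+1) → ℝ) ∈ simp' (n+1) T ↔ 0 < x ∧ w ∈ simp' n (T - x) := by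
  simp only [simp', Set.mem_setOf_eq, Fin.forall_fin_succ, Fin.sum_univ_succ, Fin.cons_zero,
    Fin.cons_succ, lt_sub_iff_add_lt', and_assoc]

lemma ff_cons1 (c : ℝ) (n p : ℕ) (x : ℝ) (w : Fin n → ℝ) :
    ff c (n+1) (p+1) (Fin.cons x w) = Real.exp (c * x) * ff c n p w := by
  unfold ff
  rw [← Real.exp_add, Finset.sum_filter, Finset.sum_filter, Fin.sum_univ_succ]
  simp [mul_add]

lemma ff_zero (c : ℝ) (n : ℕ) (v : Fin n → ℝ) : ff c n 0 v = 1 := by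
  simp [ff]

lemma JJ_rec (c : ℝ) (n p p' : ℕ) (T : ℝ) (hT : 0 < T) (g : ℝ → ℝ)
    (hg : ∀ x w, ff c (n+1) p' (Fin.cons x w) = g x * ff c n p w) :
    JJ c (n+1) p' T = ∫ x in (0:ℝ)..T, g x * JJ c n p (T - x) := by
  rw [JJ_fubini, intervalIntegral.integral_of_le hT.le, ← integral_indicator measurableSet_Ioc]
  congr 1
  ext x
  by_cases hx : x ∈ Set.Ioc 0 T
  · rw [Set.indicator_of_mem hx, JJ, ← integral_indicator (simp'_meas _ _), ← integral_const_mul]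
    congr 1
    ext w
    by_cases hw : w ∈ simp' n (T - x)
    · rw [Set.indicator_of_mem hw, Set.indicator_of_mem ((mem_cons _ _ _ _).2 ⟨hx.1, hw⟩), hg]
    · rw [Set.indicator_of_notMem hw, Set.indicator_of_notMem, mul_zero]
      rw [mem_cons]; tauto
  · rw [Set.indicator_of_notMem hx]
    have : ∀ w : Fin n → ℝ,
        (simp' (n+1) T).indicator (ff c (n+1) p') (Fin.cons x w) = 0 := by
      intro w
      apply Set.indicator_of_notMem
      rw [mem_cons]
      rintro ⟨h1, h2⟩
      have : ¬ (T - x ≤ 0) := fun h => by rw [simp'_empty _ _ h] at h2; exact h2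
      exact hx ⟨h1, by linarith⟩
    simp [this]

lemma JJ_eq (c : ℝ) (n : ℕ) : ∀ p ≤ n, ∀ T, 0 < T → JJ c n p T = SS c n p T := by
  induction n with
  | zero =>
    intro p hp T hT
    obtain rfl : p = 0 := by omega
    have h1 : simp' 0 T = Set.univ := by ext v; simp [simp', hT]
    have h2 : SS c 0 0 T = 1 := by
      unfold SS
      rw [tsum_eq_single 0]
      · simp [tt]
      · intro m hm
        have : (0 + m - 1).choose m = 0 := Nat.choose_eq_zero_of_lt (by omega)
        simp only [tt, this]; simp
    rw [h2, JJ, h1]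
    simp [ff_zero, Measure.volume_pi_eq_dirac (fun _ : Fin 0 => (0:ℝ))]
  | succ n ih =>
    intro p hp T hT
    have key : ∀ q ≤ n, ∀ g : ℝ → ℝ, ∫ x in (0:ℝ)..T, g x * JJ c n q (T - x)
        = ∫ x in (0:ℝ)..T, g x * SS c n q (T - x) := by
      intro q hq g
      rw [intervalIntegral.integral_of_le hT.le, intervalIntegral.integral_of_le hT.le,
        integral_Ioc_eq_integral_Ioo, integral_Ioc_eq_integral_Ioo]
      refine setIntegral_congr_fun measurableSet_Ioo fun x hx => ?_
      rw [ih q hq _ (by linarith [hx.2])]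
    cases p with
    | zero =>
      rw [JJ_rec c n 0 0 T hT (fun _ => 1) (by intro x w; simp [ff_zero]), key 0 (by omega)]
      simp only [one_mul]
      exact SS_int0 c n 0 T
    | succ p =>
      rw [JJ_rec c n p (p+1) T hT (fun x => Real.exp (c * x)) (fun x w => ff_cons1 c n p x w),
        key p (by omega)]
      exact SS_int1 c n p T

/-- **Power series for `I_{k,ℓ}` (proof of Proposition 5.2).** For `2 ≤ ℓ ≤ k`, `u ∈ ℝ`,
`L ≥ 0`: `I_{k,ℓ}(u,L) = ∑_{m≥0} u^m L^{k+m−1} 2^{1−k}/(k+m−1)! · C(ℓ+m−2,m)`, the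
series converging absolutely. -/
theorem stmt_4 (k l : ℕ) (hk : 2 ≤ k) (hl2 : 2 ≤ l) (hlk : l ≤ k) (u L : ℝ) (hL : 0 ≤ L) :
    Summable (fun m : ℕ =>
        |u^m * L^(k+m-1) * (2:ℝ)^(1 - (k:ℤ)) / ((k+m-1).factorial : ℝ)
          * ((l+m-2).choose m : ℝ)|) ∧
    Ikl k l u L = ∑' m : ℕ,
        u^m * L^(k+m-1) * (2:ℝ)^(1 - (k:ℤ)) / ((k+m-1).factorial : ℝ)
          * ((l+m-2).choose m : ℝ) := by
  obtain ⟨n, rfl⟩ : ∃ n, k = n + 2 := ⟨k - 2, by omega⟩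
  obtain ⟨p, rfl⟩ : ∃ p, l = p + 2 := ⟨l - 2, by omega⟩
  have hterm : ∀ m : ℕ, u^m * L^(n+2+m-1) * (2:ℝ)^(1 - ((n+2:ℕ):ℤ)) /
      ((n+2+m-1).factorial : ℝ) * ((p+2+m-2).choose m : ℝ) = tt (2*u) (n+1) (p+1) m (L/2) := by
    intro m
    have e1 : n + 2 + m - 1 = n + 1 + m := by omega
    have e2 : p + 2 + m - 2 = p + m := by omega
    have e3 : p + 1 + m - 1 = p + m := by omega
    have e4 : (1 - ((n+2:ℕ):ℤ)) = -((n+1:ℕ):ℤ) := by push_cast; ring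
    unfold tt
    rw [e1, e2, e3, e4, zpow_neg, zpow_natCast, mul_pow, div_pow, pow_add 2 (n+1) m]
    field_simp
  simp_rw [hterm]
  refine ⟨(tt_summable (2*u) (n+1) (p+1) (L/2)).abs, ?_⟩
  change JJ (2*u) (n+1) (p+1) (L/2) = SS (2*u) (n+1) (p+1) (L/2)
  rcases hL.eq_or_lt with h | h
  · rw [← h, zero_div, SS_zero, JJ_nonpos _ _ _ _ le_rfl]
  · exact JJ_eq _ _ _ (by omega) _ (by linarith)
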